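/- arXiv:1510.07433 — 7 statements merged into one kernel-verified Lean document; each statement's English description precedes it below -/
import Mathlib

section
/- Let b1, b2, b3, b4 be nonzero complex numbers and Λ ∈ ℂ∖{0} with Λ² ≠ b1b2b3b4. Set λ = Λ²/(b1b2b3b4) and, for φ ∈ ℂ∖{0}, define F(φ) = φ + F_eq(Λ) + μ(Λ)/φ and G(φ) = Λφ + G_eq(Λ) + (b1b2b3b4/Λ)·μ(Λ)/φ. Then for every φ ∈ ℂ∖{0} the quadruple (F, G, F̄, Ḡ) = (F(φ), G(φ), F(λφ), G(λφ)) satisfies relations (A1) and (A2). -/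
/-!
Write `P, e₁, e₂, e₃` for the elementary symmetric polynomials of the `bᵢ` (`P` being their
product), `f, g` for the centres `F_eq, G_eq`, `u = φ` and `v = μ / φ`. With `λ = Λ² / P` all of
`F = u + f + v`, `G = Λ u + g + (P / Λ) v`, `F̄ = (Λ² / P) u + f + (P / Λ²) v` and
`Ḡ = (Λ³ / P) u + g + (P² / Λ³) v` are affine in `u, v`, and `u v = μ`.

The constant term `1` cancels from both relations, after which they are divisible by `G` and `F̄`
respectively; they reduce to the cubic relations
`G F F̄ - (F + F̄) = (G³ - e₁ G² + e₂ G - e₃) / P` and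
`F̄ G Ḡ - (G + Ḡ) = P F̄³ - e₃ F̄² + e₂ F̄ - e₁`.
Now `F, F̄` have sum `κ G + e₃ / P` and product `G² / P - (e₁ / P) G + e₂ / P + κ`, where
`κ = (P + Λ²) / (P Λ)`, so they are the roots of a quadratic whose coefficients make the first
cubic relation evident; likewise for `G, Ḡ` and the second. These sum and product formulas come
down to two linear equations for the pair `(f, g)` of centres and one formula for `μ`.
-/

/-- The leading-order autonomous system (A1), (A2) for a quadruple `(F, G, Fb, Gb)`. -/
def autoSys (b1 b2 b3 b4 F G Fb Gb : ℂ) : Prop :=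
  ((G * F - 1) * (G * Fb - 1) =
    (G / b1 - 1) * (G / b2 - 1) * (G / b3 - 1) * (G / b4 - 1)) ∧
  ((G * Fb - 1) * (Gb * Fb - 1) =
    (b1 * Fb - 1) * (b2 * Fb - 1) * (b3 * Fb - 1) * (b4 * Fb - 1))

/-- If `f, g, m` satisfy the two linear centre equations and the product formula, then the
parametrisation with `u * v = m` solves the first relation with its right-hand side expanded
in elementary symmetric polynomials, multiplied by `P`. -/
lemma first_relation (P e1 e2 e3 L f g m u v : ℂ) (hP : P ≠ 0) (hL : L ≠ 0) (huv : u * v = m)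
    (h1 : 2 * f * P * L - (P + L ^ 2) * g = e3 * L)
    (h2 : f * (P + L ^ 2) = 2 * L * g - e1 * L)
    (h3 : m * (P - L ^ 2) ^ 2 =
      L ^ 2 * (g ^ 2 - P * f ^ 2 - e1 * g + e2) + L * (P + L ^ 2))
    (F G Fb : ℂ) (hF : F = u + f + v) (hG : G = L * u + g + P / L * v)
    (hFb : Fb = L ^ 2 / P * u + f + P / L ^ 2 * v) :
    P * ((G * F - 1) * (G * Fb - 1)) = G ^ 4 - e1 * G ^ 3 + e2 * G ^ 2 - e3 * G + P := by
  have hsum : P * L * (F + Fb) = (P + L ^ 2) * G + e3 * L := by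
    subst hF hG hFb
    field_simp
    linear_combination L * h1
  have hprod : P * L * (F * Fb) = L * G ^ 2 - L * e1 * G + (P + L ^ 2) + e2 * L := by
    subst hF hG hFb huv
    field_simp
    linear_combination h3 + (L ^ 2 * u + P * v) * h2
  apply mul_left_cancel₀ hL
  linear_combination G ^ 2 * hprod - G * hsum

/-- Companion of `first_relation`, with `Fb` now between its neighbours `G` and `Gb`. -/
lemma second_relation (P e1 e2 e3 L f g m u v : ℂ) (hP : P ≠ 0) (hL : L ≠ 0) (huv : u * v = m)
    (h1 : 2 * f * P * L - (P + L ^ 2) * g = e3 * L)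
    (h2 : f * (P + L ^ 2) = 2 * L * g - e1 * L)
    (h3 : m * (P - L ^ 2) ^ 2 =
      L ^ 2 * (g ^ 2 - P * f ^ 2 - e1 * g + e2) + L * (P + L ^ 2))
    (G Fb Gb : ℂ) (hG : G = L * u + g + P / L * v)
    (hFb : Fb = L ^ 2 / P * u + f + P / L ^ 2 * v)
    (hGb : Gb = L ^ 3 / P * u + g + P ^ 2 / L ^ 3 * v) :
    (G * Fb - 1) * (Gb * Fb - 1) =
      P * Fb ^ 4 - e3 * Fb ^ 3 + e2 * Fb ^ 2 - e1 * Fb + 1 := by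
  -- The product formula for `m` rewritten by means of `f * h1 - g * h2`.
  have h3' : m * (P - L ^ 2) ^ 2 =
      L ^ 2 * (P * f ^ 2 - g ^ 2 - e3 * f + e2) + L * (P + L ^ 2) := by
    linear_combination h3 - L * f * h1 - L * g * h2
  have hsum : L * (G + Gb) = (P + L ^ 2) * Fb + e1 * L := by
    subst hG hFb hGb
    field_simp
    linear_combination (-P * L ^ 2) * h2
  have hprod : L * (G * Gb) = L * P * Fb ^ 2 - L * e3 * Fb + e2 * L + (P + L ^ 2) := by
    subst hG hFb hGb huv
    field_simp
    linear_combination P * L ^ 2 * h3' - (L ^ 5 * u + L * P ^ 2 * v) * h1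
  apply mul_left_cancel₀ hL
  linear_combination Fb ^ 2 * hprod - Fb * hsum

theorem stmt10 (b1 b2 b3 b4 Λ : ℂ)
    (hb1 : b1 ≠ 0) (hb2 : b2 ≠ 0) (hb3 : b3 ≠ 0) (hb4 : b4 ≠ 0)
    (hΛ : Λ ≠ 0) (hΛ2 : Λ ^ 2 ≠ b1 * b2 * b3 * b4)
    (S1p S3p S1m S3m lam Feq Geq mu : ℂ)
    (hS1p : S1p = b1 + b2 + b3 + b4)
    (hS3p : S3p = b1 * b2 * b3 + b1 * b2 * b4 + b1 * b3 * b4 + b2 * b3 * b4)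
    (hS1m : S1m = b1⁻¹ + b2⁻¹ + b3⁻¹ + b4⁻¹)
    (hS3m : S3m = b1⁻¹ * b2⁻¹ * b3⁻¹ + b1⁻¹ * b2⁻¹ * b4⁻¹ + b1⁻¹ * b3⁻¹ * b4⁻¹ +
      b2⁻¹ * b3⁻¹ * b4⁻¹)
    (hlam : lam = Λ ^ 2 / (b1 * b2 * b3 * b4))
    (hFeq : Feq = -(b1 * b2 * b3 * b4) * Λ * (S1p + 2 * S1m * Λ + S3m * Λ ^ 2) /
      (b1 * b2 * b3 * b4 - Λ ^ 2) ^ 2)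
    (hGeq : Geq = -(b1 * b2 * b3 * b4) * Λ * (S3p + 2 * S1p * Λ + S1m * Λ ^ 2) /
      (b1 * b2 * b3 * b4 - Λ ^ 2) ^ 2)
    (hmu : mu = Λ * (Λ + b1 * b2) * (Λ + b1 * b3) * (Λ + b1 * b4) * (Λ + b2 * b3) *
      (Λ + b2 * b4) * (Λ + b3 * b4) / (b1 * b2 * b3 * b4 - Λ ^ 2) ^ 4) :
    ∀ φ : ℂ, φ ≠ 0 →
      autoSys b1 b2 b3 b4
        (φ + Feq + mu / φ)
        (Λ * φ + Geq + (b1 * b2 * b3 * b4 / Λ) * (mu / φ))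
        ((lam * φ) + Feq + mu / (lam * φ))
        (Λ * (lam * φ) + Geq + (b1 * b2 * b3 * b4 / Λ) * (mu / (lam * φ))) := by
  intro φ hφ
  have hP : b1 * b2 * b3 * b4 ≠ 0 := by simp [*]
  have hD : b1 * b2 * b3 * b4 - Λ ^ 2 ≠ 0 := sub_ne_zero.mpr hΛ2.symm
  have hm1 : b1 * b2 * b3 * b4 * S1m = S3p := by
    subst hS1m hS3p
    field_simp
    ring
  have hm3 : b1 * b2 * b3 * b4 * S3m = S1p := by
    subst hS3m hS1p
    field_simp
    ring
  obtain ⟨e2, he2⟩ : ∃ e2, e2 = b1 * b2 + b1 * b3 + b1 * b4 + b2 * b3 + b2 * b4 + b3 * b4 :=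
    ⟨_, rfl⟩
  -- The six factors of `μ` pair up into `Λ² + P + Λ θ`, with `θ` running over the roots
  -- `b₁b₂ + b₃b₄`, `b₁b₃ + b₂b₄`, `b₁b₄ + b₂b₃` of the resolvent cubic.
  have hres : (Λ + b1 * b2) * (Λ + b1 * b3) * (Λ + b1 * b4) * (Λ + b2 * b3) *
      (Λ + b2 * b4) * (Λ + b3 * b4) =
      (Λ ^ 2 + b1 * b2 * b3 * b4) ^ 3 + (Λ ^ 2 + b1 * b2 * b3 * b4) ^ 2 * Λ * e2 +
      (Λ ^ 2 + b1 * b2 * b3 * b4) * Λ ^ 2 * (S1p * S3p - 4 * (b1 * b2 * b3 * b4)) +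
      Λ ^ 3 * (S3p ^ 2 + S1p ^ 2 * (b1 * b2 * b3 * b4) - 4 * e2 * (b1 * b2 * b3 * b4)) := by
    subst hS1p hS3p he2
    ring
  have hA : ∀ x : ℂ, b1 * b2 * b3 * b4 *
      ((x / b1 - 1) * (x / b2 - 1) * (x / b3 - 1) * (x / b4 - 1)) =
      x ^ 4 - S1p * x ^ 3 + e2 * x ^ 2 - S3p * x + b1 * b2 * b3 * b4 := by
    intro x
    subst hS1p hS3p he2
    field_simp
    ring
  have hB : ∀ x : ℂ, (b1 * x - 1) * (b2 * x - 1) * (b3 * x - 1) * (b4 * x - 1) =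
      b1 * b2 * b3 * b4 * x ^ 4 - S3p * x ^ 3 + e2 * x ^ 2 - S1p * x + 1 := by
    intro x
    subst hS1p hS3p he2
    ring
  have hmu' : mu = Λ * ((Λ + b1 * b2) * (Λ + b1 * b3) * (Λ + b1 * b4) * (Λ + b2 * b3) *
      (Λ + b2 * b4) * (Λ + b3 * b4)) / (b1 * b2 * b3 * b4 - Λ ^ 2) ^ 4 := by
    rw [hmu]
    ring
  rw [hres] at hmu'
  clear hmu hres hS1p hS3p hS1m hS3m he2
  unfold autoSys
  generalize b1 * b2 * b3 * b4 = P at *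
  have hf : Feq * (P - Λ ^ 2) ^ 2 = -Λ * (P * S1p + 2 * S3p * Λ + S1p * Λ ^ 2) := by
    rw [hFeq, div_mul_cancel₀ _ (pow_ne_zero 2 hD)]
    linear_combination (-2 * Λ ^ 2) * hm1 - Λ ^ 3 * hm3
  have hg : Geq * (P - Λ ^ 2) ^ 2 = -Λ * (P * S3p + 2 * P * S1p * Λ + S3p * Λ ^ 2) := by
    rw [hGeq, div_mul_cancel₀ _ (pow_ne_zero 2 hD)]
    linear_combination (-Λ ^ 3) * hm1
  have hm : mu * (P - Λ ^ 2) ^ 4 = Λ * ((Λ ^ 2 + P) ^ 3 + (Λ ^ 2 + P) ^ 2 * Λ * e2 +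
      (Λ ^ 2 + P) * Λ ^ 2 * (S1p * S3p - 4 * P) +
      Λ ^ 3 * (S3p ^ 2 + S1p ^ 2 * P - 4 * e2 * P)) := by
    rw [hmu', div_mul_cancel₀ _ (pow_ne_zero 4 hD)]
  have h1 : 2 * Feq * P * Λ - (P + Λ ^ 2) * Geq = S3p * Λ := by
    apply mul_right_cancel₀ (pow_ne_zero 2 hD)
    linear_combination 2 * P * Λ * hf - (P + Λ ^ 2) * hg
  have h2 : Feq * (P + Λ ^ 2) = 2 * Λ * Geq - S1p * Λ := by
    apply mul_right_cancel₀ (pow_ne_zero 2 hD)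
    linear_combination (P + Λ ^ 2) * hf - 2 * Λ * hg
  have h3 : mu * (P - Λ ^ 2) ^ 2 =
      Λ ^ 2 * (Geq ^ 2 - P * Feq ^ 2 - S1p * Geq + e2) + Λ * (P + Λ ^ 2) := by
    -- Eliminating the quadratic terms by `h1` and `h2` leaves a formula linear in the centres.
    have h3l : mu * (P - Λ ^ 2) ^ 2 =
        Λ ^ 2 * (e2 - (S1p * Geq + S3p * Feq) / 2) + Λ * (P + Λ ^ 2) := by
      apply mul_right_cancel₀ (pow_ne_zero 2 hD)
      linear_combination hm + Λ ^ 2 / 2 * S1p * hg + Λ ^ 2 / 2 * S3p * hf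
    linear_combination h3l + Λ / 2 * Feq * h1 + Λ / 2 * Geq * h2
  have huv : φ * (mu / φ) = mu := mul_div_cancel₀ mu hφ
  have hFb : lam * φ + Feq + mu / (lam * φ) =
      Λ ^ 2 / P * φ + Feq + P / Λ ^ 2 * (mu / φ) := by
    rw [hlam]
    field_simp
  have hGb : Λ * (lam * φ) + Geq + P / Λ * (mu / (lam * φ)) =
      Λ ^ 3 / P * φ + Geq + P ^ 2 / Λ ^ 3 * (mu / φ) := by
    rw [hlam]
    field_simp
  constructor
  · apply mul_left_cancel₀ hP
    rw [hA]
    exact first_relation P S1p e2 S3p Λ Feq Geq mu φ (mu / φ) hP hΛ huv h1 h2 h3 _ _ _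
      rfl rfl hFb
  · rw [hB]
    exact second_relation P S1p e2 S3p Λ Feq Geq mu φ (mu / φ) hP hΛ huv h1 h2 h3 _ _ _
      rfl hFb hGb
end

section
/- Let b1, b2, b3, b4 be nonzero complex numbers and Λ ∈ ℂ∖{0} with Λ² ≠ b1b2b3b4. For φ ∈ ℂ∖{0} define F(φ) = φ + F_eq(Λ) + μ(Λ)/φ and G(φ) = Λφ + G_eq(Λ) + (b1b2b3b4/Λ)·μ(Λ)/φ. Then for every φ ∈ ℂ∖{0}: F(φ)² + S₂⁻·F(φ)G(φ) + S₄⁻·G(φ)² − S₁⁻·F(φ) − S₃⁻·G(φ) = (S₂⁻ + Λ/(b1b2b3b4) + 1/Λ)·(F(φ)G(φ) − 1). -/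
/-!
Write `E = b1 b2 b3 b4`. Moving everything to one side, the claim says that `(F, G)` lies on the conic
`F² - (Λ/E + 1/Λ) F G + G²/E - S₁⁻ F - S₃⁻ G + (S₂⁻ + Λ/E + 1/Λ) = 0`,
whose quadratic part factors as `(F - G/Λ)(F - ΛG/E)`. The point `(Feq, Geq)` is the centre of this
conic, i.e. the gradient of the left side vanishes there. Hence along the curve only the
quadratic part of the displacement from the centre and the value at the centre survive. The
displacement is `(φ + μ/φ, Λφ + (E/Λ) μ/φ)`; the first linear factor annihilates its `φ` part and the
second its `μ/φ` part, so the quadratic part is the constant `-μ (E - Λ²)² / (E Λ²)`, and `μ` is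
exactly the value for which this cancels the value at the centre.
-/

theorem stmt11 (b1 b2 b3 b4 Λ : ℂ)
    (hb1 : b1 ≠ 0) (hb2 : b2 ≠ 0) (hb3 : b3 ≠ 0) (hb4 : b4 ≠ 0)
    (hΛ : Λ ≠ 0) (hΛ2 : Λ ^ 2 ≠ b1 * b2 * b3 * b4)
    (S1p S3p S1m S2m S3m S4m Feq Geq mu : ℂ)
    (hS1p : S1p = b1 + b2 + b3 + b4)
    (hS3p : S3p = b1 * b2 * b3 + b1 * b2 * b4 + b1 * b3 * b4 + b2 * b3 * b4)
    (hS1m : S1m = b1⁻¹ + b2⁻¹ + b3⁻¹ + b4⁻¹)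
    (hS2m : S2m = b1⁻¹ * b2⁻¹ + b1⁻¹ * b3⁻¹ + b1⁻¹ * b4⁻¹ + b2⁻¹ * b3⁻¹ + b2⁻¹ * b4⁻¹ +
      b3⁻¹ * b4⁻¹)
    (hS3m : S3m = b1⁻¹ * b2⁻¹ * b3⁻¹ + b1⁻¹ * b2⁻¹ * b4⁻¹ + b1⁻¹ * b3⁻¹ * b4⁻¹ +
      b2⁻¹ * b3⁻¹ * b4⁻¹)
    (hS4m : S4m = b1⁻¹ * b2⁻¹ * b3⁻¹ * b4⁻¹)
    (hFeq : Feq = -(b1 * b2 * b3 * b4) * Λ * (S1p + 2 * S1m * Λ + S3m * Λ ^ 2) /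
      (b1 * b2 * b3 * b4 - Λ ^ 2) ^ 2)
    (hGeq : Geq = -(b1 * b2 * b3 * b4) * Λ * (S3p + 2 * S1p * Λ + S1m * Λ ^ 2) /
      (b1 * b2 * b3 * b4 - Λ ^ 2) ^ 2)
    (hmu : mu = Λ * (Λ + b1 * b2) * (Λ + b1 * b3) * (Λ + b1 * b4) * (Λ + b2 * b3) *
      (Λ + b2 * b4) * (Λ + b3 * b4) / (b1 * b2 * b3 * b4 - Λ ^ 2) ^ 4) :
    ∀ φ : ℂ, φ ≠ 0 →
      ∀ F G : ℂ, F = φ + Feq + mu / φ →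
        G = Λ * φ + Geq + (b1 * b2 * b3 * b4 / Λ) * (mu / φ) →
        F ^ 2 + S2m * F * G + S4m * G ^ 2 - S1m * F - S3m * G =
          (S2m + Λ / (b1 * b2 * b3 * b4) + Λ⁻¹) * (F * G - 1) := by
  have hD : b1 * b2 * b3 * b4 - Λ ^ 2 ≠ 0 := sub_ne_zero.mpr (Ne.symm hΛ2)
  -- The two components of the gradient of the conic vanish at `(Feq, Geq)`.
  have h1 : 2 * Feq - (Λ / (b1 * b2 * b3 * b4) + Λ⁻¹) * Geq = S1m := by
    subst hFeq hGeq hS1p hS3p hS1m hS3m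
    field_simp
    ring
  have h2 : 2 * S4m * Geq - (Λ / (b1 * b2 * b3 * b4) + Λ⁻¹) * Feq = S3m := by
    subst hFeq hGeq hS1p hS3p hS1m hS3m hS4m
    field_simp
    ring
  -- The value of the conic at its centre, where half of the linear part survives.
  have h3 : -(S1m * Feq + S3m * Geq) / 2 + (S2m + Λ / (b1 * b2 * b3 * b4) + Λ⁻¹) =
      mu * (b1 * b2 * b3 * b4 - Λ ^ 2) ^ 2 / (b1 * b2 * b3 * b4 * Λ ^ 2) := by
    subst hFeq hGeq hS1p hS3p hS1m hS2m hS3m hmu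
    field_simp
    ring
  intro φ hφ F G hF hG
  -- The quadratic part evaluated on the displacement from the centre.
  have h4 : (F - Feq) ^ 2 - (Λ / (b1 * b2 * b3 * b4) + Λ⁻¹) * ((F - Feq) * (G - Geq)) +
      S4m * (G - Geq) ^ 2 =
      -(mu * (b1 * b2 * b3 * b4 - Λ ^ 2) ^ 2 / (b1 * b2 * b3 * b4 * Λ ^ 2)) := by
    have hF' : F - Feq = φ + mu / φ := by rw [hF]; ring
    have hG' : G - Geq = Λ * φ + (b1 * b2 * b3 * b4 / Λ) * (mu / φ) := by rw [hG]; ring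
    rw [hF', hG', hS4m]
    clear * - hb1 hb2 hb3 hb4 hΛ hφ
    field_simp
    ring
  linear_combination h4 + h3 + (F - Feq / 2) * h1 + (G - Geq / 2) * h2
end

section
/- Let b1, b2, b3, b4 be nonzero complex numbers and let (i,j,k,l) be an arrangement with {i,j,k,l} = {1,2,3,4} and b_i b_j ≠ b_k b_l. Set Λ = −b_i b_j, λ = b_i b_j/(b_k b_l), f₁ = (b_i + b_j − b_k − b_l)/(b_i b_j − b_k b_l) and g₁ = (b_i b_j(b_k + b_l) − b_k b_l(b_i + b_j))/(b_i b_j − b_k b_l). Then for every φ ∈ ℂ the quadruple (F, G, F̄, Ḡ) = (φ + f₁, Λφ + g₁, λφ + f₁, Λλφ + g₁) satisfies relations (A1) and (A2). -/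
theorem line_factor_left {a b x y : ℂ} (h : y = (a + b) - a * b * x) :
    y * x - 1 = -((a * x - 1) * (b * x - 1)) := by
  subst h; ring

theorem line_factor_right {a b x y : ℂ} (ha : a ≠ 0) (hb : b ≠ 0)
    (h : y = (a + b) - a * b * x) :
    y * x - 1 = -((y / a - 1) * (y / b - 1)) := by
  subst h; field_simp; ring

/-- The two right-hand sides of the system are instances of this symmetric product. -/
theorem prod_four_eq_of_multiset_eq {a b c d a' b' c' d' : ℂ}
    (h : ({a, b, c, d} : Multiset ℂ) = {a', b', c', d'}) (p : ℂ → ℂ) :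
    p a' * p b' * p c' * p d' = p a * p b * p c * p d := by
  have := congrArg (fun s : Multiset ℂ => (s.map p).prod) h
  simp only [Multiset.insert_eq_cons, Multiset.map_cons, Multiset.map_singleton,
    Multiset.prod_cons, Multiset.prod_singleton] at this
  linear_combination -this

theorem stmt13 (b1 b2 b3 b4 bi bj bk bl : ℂ)
    (hb1 : b1 ≠ 0) (hb2 : b2 ≠ 0) (hb3 : b3 ≠ 0) (hb4 : b4 ≠ 0)
    (hperm : ({bi, bj, bk, bl} : Multiset ℂ) = {b1, b2, b3, b4})
    (hne : bi * bj ≠ bk * bl)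
    (Λ lam f1 g1 : ℂ)
    (hΛ : Λ = -(bi * bj))
    (hlam : lam = bi * bj / (bk * bl))
    (hf1 : f1 = (bi + bj - bk - bl) / (bi * bj - bk * bl))
    (hg1 : g1 = (bi * bj * (bk + bl) - bk * bl * (bi + bj)) / (bi * bj - bk * bl)) :
    ∀ φ : ℂ, autoSys b1 b2 b3 b4 (φ + f1) (Λ * φ + g1) (lam * φ + f1)
      (Λ * (lam * φ) + g1) := by
  intro φ
  have hnz : ∀ x ∈ ({bi, bj, bk, bl} : Multiset ℂ), x ≠ 0 := by
    rw [hperm]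
    simp [hb1, hb2, hb3, hb4]
  have hi : bi ≠ 0 := hnz bi (by simp)
  have hj : bj ≠ 0 := hnz bj (by simp)
  have hk : bk ≠ 0 := hnz bk (by simp)
  have hl : bl ≠ 0 := hnz bl (by simp)
  have hD : bi * bj - bk * bl ≠ 0 := sub_ne_zero.mpr hne
  have hij : bi * bj * f1 + g1 = bi + bj := by
    rw [hf1, hg1]; field_simp; ring
  have hkl : bk * bl * f1 + g1 = bk + bl := by
    rw [hf1, hg1]; field_simp; ring
  have hlam' : bk * bl * lam = bi * bj := by
    rw [hlam]; field_simp
  have e1 : Λ * φ + g1 = (bi + bj) - bi * bj * (φ + f1) := by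
    rw [hΛ]; linear_combination hij
  have e2 : Λ * φ + g1 = (bk + bl) - bk * bl * (lam * φ + f1) := by
    rw [hΛ]; linear_combination hkl + φ * hlam'
  have e3 : Λ * (lam * φ) + g1 = (bi + bj) - bi * bj * (lam * φ + f1) := by
    rw [hΛ]; linear_combination hij
  constructor
  · rw [prod_four_eq_of_multiset_eq hperm (fun b => (Λ * φ + g1) / b - 1),
      line_factor_right hi hj e1, line_factor_right hk hl e2]
    ring
  · rw [prod_four_eq_of_multiset_eq hperm (fun b => b * (lam * φ + f1) - 1),
      line_factor_left e2, line_factor_left e3]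
    ring
end

section
/- Let b1, b2, b3, b4 be nonzero complex numbers and let r ∈ ℂ satisfy r² = b1b2b3b4 and S₁⁺ + r·S₁⁻ ≠ 0. Define, for χ ∈ ℂ, F_l(χ) = (2 + r·S₂⁻)/(S₁⁺ + r·S₁⁻) − (S₁⁺/r)·χ + (S₁⁺/r + S₁⁻)·χ² and G_l(χ) = (2r + S₂⁺)/(S₁⁺ + r·S₁⁻) + r·S₁⁻·χ + (S₁⁺ + r·S₁⁻)·χ². Then for every χ ∈ ℂ the quadruple (F, G, F̄, Ḡ) = (F_l(χ), G_l(χ), F_l(χ + 1), G_l(χ + 1)) satisfies relations (A1) and (A2). -/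
/-- The first relation cleared of denominators, with `f = r F` and `f' = r F̄` expressed via `G`. -/
lemma first_relation_cleared (p q e r c χ G : ℂ) (hc : (p + q) * c = 2 * r + e)
    (hG : G = c + q * χ + (p + q) * χ ^ 2) :
    (G * (G - (p + q) * χ) - r) * (G * (G + (q + (p + q) * χ)) - r) =
      G ^ 4 - p * G ^ 3 + e * G ^ 2 - r * q * G + r ^ 2 := by
  linear_combination G ^ 2 * hc + (p + q) * G ^ 2 * hG

/-- The second relation cleared of denominators, with `G` and `Ḡ` expressed via `f = r F̄`. -/
lemma second_relation_cleared (p q e r c χ f : ℂ) (hc : (p + q) * c = 2 * r + e)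
    (hf : f = c + (q + (p + q) * χ) * (1 + χ)) :
    ((f - (q + (p + q) * χ)) * f - r) * ((f + (p + q) * (1 + χ)) * f - r) =
      f ^ 4 - q * f ^ 3 + e * f ^ 2 - r * p * f + r ^ 2 := by
  linear_combination f ^ 2 * hc + (p + q) * f ^ 2 * hf

theorem stmt15 (b1 b2 b3 b4 r : ℂ)
    (hb1 : b1 ≠ 0) (hb2 : b2 ≠ 0) (hb3 : b3 ≠ 0) (hb4 : b4 ≠ 0)
    (hr : r ^ 2 = b1 * b2 * b3 * b4)
    (S1p S2p S1m S2m : ℂ)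
    (hS1p : S1p = b1 + b2 + b3 + b4)
    (hS2p : S2p = b1 * b2 + b1 * b3 + b1 * b4 + b2 * b3 + b2 * b4 + b3 * b4)
    (hS1m : S1m = b1⁻¹ + b2⁻¹ + b3⁻¹ + b4⁻¹)
    (hS2m : S2m = b1⁻¹ * b2⁻¹ + b1⁻¹ * b3⁻¹ + b1⁻¹ * b4⁻¹ + b2⁻¹ * b3⁻¹ + b2⁻¹ * b4⁻¹ +
      b3⁻¹ * b4⁻¹)
    (hden : S1p + r * S1m ≠ 0)
    (Fl Gl : ℂ → ℂ)
    (hFl : ∀ χ : ℂ, Fl χ = (2 + r * S2m) / (S1p + r * S1m) - (S1p / r) * χ +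
      (S1p / r + S1m) * χ ^ 2)
    (hGl : ∀ χ : ℂ, Gl χ = (2 * r + S2p) / (S1p + r * S1m) + r * S1m * χ +
      (S1p + r * S1m) * χ ^ 2) :
    ∀ χ : ℂ, autoSys b1 b2 b3 b4 (Fl χ) (Gl χ) (Fl (χ + 1)) (Gl (χ + 1)) := by
  have hr0 : r ≠ 0 := by
    rintro rfl
    have h : b1 * b2 * b3 * b4 ≠ 0 := by positivity
    exact h (by rw [← hr]; ring)
  -- `q = r S₁⁻` encodes the third symmetric function, since `r q = S₃⁺`.
  obtain ⟨q, hq⟩ : ∃ q, q = r * S1m := ⟨_, rfl⟩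
  have hm : S1m = q / r := by rw [hq]; field_simp
  have he3 : r * q = b2 * b3 * b4 + b1 * b3 * b4 + b1 * b2 * b4 + b1 * b2 * b3 := by
    have h : r * q = r ^ 2 * S1m := by rw [hq]; ring
    rw [h, hr, hS1m]
    field_simp
  have he2 : r ^ 2 * S2m = S2p := by
    rw [hr, hS2m, hS2p]
    field_simp
    ring
  rw [← hq] at hden
  obtain ⟨c, hcdef⟩ : ∃ c, c = (2 * r + S2p) / (S1p + q) := ⟨_, rfl⟩
  have hc : (S1p + q) * c = 2 * r + S2p := by rw [hcdef]; field_simp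
  have hF : ∀ χ, Fl χ = (c - S1p * χ + (S1p + q) * χ ^ 2) / r := by
    intro χ
    have h : (2 + r * S2m) / (S1p + q) = c / r := by
      rw [hcdef, ← he2]
      field_simp
    rw [hFl, ← hq, h, hm]
    field_simp
  have hG : ∀ χ, Gl χ = c + q * χ + (S1p + q) * χ ^ 2 := by
    intro χ
    rw [hGl, ← hq, hcdef]
  intro χ
  obtain ⟨G, hGd⟩ : ∃ G, G = Gl χ := ⟨_, rfl⟩
  obtain ⟨f, hfd⟩ : ∃ f, f = c + (q + (S1p + q) * χ) * (1 + χ) := ⟨_, rfl⟩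
  have hGe : G = c + q * χ + (S1p + q) * χ ^ 2 := by rw [hGd, hG]
  have hF0 : Fl χ = (G - (S1p + q) * χ) / r := by rw [hF, hGe]; ring
  have hF1 : Fl (χ + 1) = f / r := by rw [hF, hfd]; ring
  have hfG : f = G + (q + (S1p + q) * χ) := by rw [hfd, hGe]; ring
  have hG1 : Gl (χ + 1) = f + (S1p + q) * (1 + χ) := by rw [hG, hfd]; ring
  have h1 := first_relation_cleared S1p q S2p r c χ G hc hGe
  have h2 := second_relation_cleared S1p q S2p r c χ f hc hfd
  rw [← hfG] at h1
  rw [show f - (q + (S1p + q) * χ) = G by rw [hfG]; ring] at h2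
  refine ⟨?_, ?_⟩
  · rw [← hGd, hF0, hF1]
    have hL : (G * ((G - (S1p + q) * χ) / r) - 1) * (G * (f / r) - 1) =
        (G * (G - (S1p + q) * χ) - r) * (G * f - r) / r ^ 2 := by
      field_simp
    have hR : (G / b1 - 1) * (G / b2 - 1) * (G / b3 - 1) * (G / b4 - 1) =
        (G - b1) * (G - b2) * (G - b3) * (G - b4) / r ^ 2 := by
      rw [hr]
      field_simp
    rw [hL, hR, h1]
    congr 1
    rw [he3, hr, hS1p, hS2p]
    ring
  · rw [← hGd, hF1, hG1]
    have hL : (G * (f / r) - 1) * ((f + (S1p + q) * (1 + χ)) * (f / r) - 1) =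
        (G * f - r) * ((f + (S1p + q) * (1 + χ)) * f - r) / r ^ 2 := by
      field_simp
    have hP : (b1 * f - r) * (b2 * f - r) * (b3 * f - r) * (b4 * f - r) =
        r ^ 2 * (f ^ 4 - q * f ^ 3 + S2p * f ^ 2 - r * S1p * f + r ^ 2) := by
      rw [hS1p, hS2p]
      linear_combination -f ^ 4 * hr + r * f ^ 3 * he3
    have hR : (b1 * (f / r) - 1) * (b2 * (f / r) - 1) * (b3 * (f / r) - 1) * (b4 * (f / r) - 1) =
        (b1 * f - r) * (b2 * f - r) * (b3 * f - r) * (b4 * f - r) / r ^ 4 := by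
      field_simp
    rw [hL, h2, hR, hP]
    field_simp
end

section
/- Let b1, b2, b3, b4 be nonzero complex numbers, and let Λ ∈ ℂ∖{0} satisfy Λ² ≠ b1b2b3b4 and μ(Λ) ≠ 0. Let (F₀, G₀) ∈ ℂ² satisfy F₀·G₀ ≠ 0, F₀·G₀ ≠ 1 and F₀² + S₂⁻·F₀G₀ + S₄⁻·G₀² − S₁⁻·F₀ − S₃⁻·G₀ = (S₂⁻ + Λ/(b1b2b3b4) + 1/Λ)·(F₀G₀ − 1). Then there exists a unique φ₀ ∈ ℂ∖{0} such that F₀ = φ₀ + F_eq(Λ) + μ(Λ)/φ₀ and G₀ = Λφ₀ + G_eq(Λ) + (b1b2b3b4/Λ)·μ(Λ)/φ₀. -/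
/-!
Put `u = φ₀` and `v = μ/φ₀`. The two equations are linear in `(u, v)`, with determinant
`(P - Λ²)/Λ ≠ 0` where `P = b1b2b3b4`, so `u = (P f - Λ g)/(P - Λ²)` and `v = Λ (g - Λ f)/(P - Λ²)`
with `f = F₀ - F_eq`, `g = G₀ - G_eq`. This gives uniqueness, and reduces existence to `u v = μ`.
The invariant relation is a conic in `(F₀, G₀)` whose centre is `(F_eq, G_eq)` and whose quadratic
part is, up to the factor `-1/(PΛ)`, the product `(P F - Λ G)(G - Λ F)`; centring it yields exactly
`u v = μ`, because of the expansion of `∏_{i<j} (Λ + b_i b_j)` in `conic_constant`.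
-/

/-- The product `∏_{i<j} (Λ + b_i b_j)` expressed through the elementary symmetric polynomials;
`conic_centred` recognises it, up to scaling, as the constant term of the translated conic. -/
theorem conic_constant (b1 b2 b3 b4 Λ P S1 S2 S3 : ℂ) (hP : P = b1 * b2 * b3 * b4)
    (h1 : S1 = b1 + b2 + b3 + b4)
    (h2 : S2 = b1 * b2 + b1 * b3 + b1 * b4 + b2 * b3 + b2 * b4 + b3 * b4)
    (h3 : S3 = b1 * b2 * b3 + b1 * b2 * b4 + b1 * b3 * b4 + b2 * b3 * b4) :
    (Λ + b1 * b2) * (Λ + b1 * b3) * (Λ + b1 * b4) * (Λ + b2 * b3) * (Λ + b2 * b4) * (Λ + b3 * b4) =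
      (P - Λ ^ 2) ^ 2 * (Λ * S2 + Λ ^ 2 + P) +
        Λ ^ 2 * (S1 * S3 * (P + Λ ^ 2) + Λ * (S3 ^ 2 + P * S1 ^ 2)) := by
  subst hP h1 h2 h3
  ring

/-- A point of the conic, translated to the centre `(Fc, Gc)`, satisfies the hyperbola equation
with asymptotic directions `P f = Λ g` and `g = Λ f`. -/
theorem conic_centred (Λ P S1 S2 S3 Fc Gc F G R : ℂ) (hD : P - Λ ^ 2 ≠ 0)
    (hF : Fc * (P - Λ ^ 2) ^ 2 = -Λ * (P * S1 + 2 * S3 * Λ + S1 * Λ ^ 2))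
    (hG : Gc * (P - Λ ^ 2) ^ 2 = -Λ * (P * S3 + 2 * P * S1 * Λ + S3 * Λ ^ 2))
    (hR : R = (P - Λ ^ 2) ^ 2 * (Λ * S2 + Λ ^ 2 + P) +
        Λ ^ 2 * (S1 * S3 * (P + Λ ^ 2) + Λ * (S3 ^ 2 + P * S1 ^ 2)))
    (h : P * Λ * F ^ 2 + Λ * G ^ 2 - (Λ ^ 2 + P) * F * G - Λ * S3 * F - Λ * S1 * G +
      (Λ * S2 + Λ ^ 2 + P) = 0) :
    (P * (F - Fc) - Λ * (G - Gc)) * ((G - Gc) - Λ * (F - Fc)) * (P - Λ ^ 2) ^ 2 = R := by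
  have hD2 : (P - Λ ^ 2) ^ 2 ≠ 0 := pow_ne_zero 2 hD
  -- The centre is where the gradient of the conic vanishes.
  have c1 : 2 * P * Λ * Fc - (Λ ^ 2 + P) * Gc = Λ * S3 := by
    apply mul_right_cancel₀ hD2
    linear_combination 2 * P * Λ * hF - (Λ ^ 2 + P) * hG
  have c2 : 2 * Λ * Gc - (Λ ^ 2 + P) * Fc = Λ * S1 := by
    apply mul_right_cancel₀ hD2
    linear_combination 2 * Λ * hG - (Λ ^ 2 + P) * hF
  have key : (P * (F - Fc) - Λ * (G - Gc)) * ((G - Gc) - Λ * (F - Fc)) =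
      (Λ * S2 + Λ ^ 2 + P) - Λ * (S3 * Fc + S1 * Gc) / 2 := by
    linear_combination -h + (F - Fc / 2) * c1 + (G - Gc / 2) * c2
  rw [key, hR]
  linear_combination -Λ * S3 / 2 * hF - Λ * S1 / 2 * hG

theorem stmt16 (b1 b2 b3 b4 Λ : ℂ)
    (hb1 : b1 ≠ 0) (hb2 : b2 ≠ 0) (hb3 : b3 ≠ 0) (hb4 : b4 ≠ 0)
    (hΛ : Λ ≠ 0) (hΛ2 : Λ ^ 2 ≠ b1 * b2 * b3 * b4)
    (S1p S3p S1m S2m S3m S4m Feq Geq mu : ℂ)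
    (hS1p : S1p = b1 + b2 + b3 + b4)
    (hS3p : S3p = b1 * b2 * b3 + b1 * b2 * b4 + b1 * b3 * b4 + b2 * b3 * b4)
    (hS1m : S1m = b1⁻¹ + b2⁻¹ + b3⁻¹ + b4⁻¹)
    (hS2m : S2m = b1⁻¹ * b2⁻¹ + b1⁻¹ * b3⁻¹ + b1⁻¹ * b4⁻¹ + b2⁻¹ * b3⁻¹ + b2⁻¹ * b4⁻¹ +
      b3⁻¹ * b4⁻¹)
    (hS3m : S3m = b1⁻¹ * b2⁻¹ * b3⁻¹ + b1⁻¹ * b2⁻¹ * b4⁻¹ + b1⁻¹ * b3⁻¹ * b4⁻¹ +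
      b2⁻¹ * b3⁻¹ * b4⁻¹)
    (hS4m : S4m = b1⁻¹ * b2⁻¹ * b3⁻¹ * b4⁻¹)
    (hFeq : Feq = -(b1 * b2 * b3 * b4) * Λ * (S1p + 2 * S1m * Λ + S3m * Λ ^ 2) /
      (b1 * b2 * b3 * b4 - Λ ^ 2) ^ 2)
    (hGeq : Geq = -(b1 * b2 * b3 * b4) * Λ * (S3p + 2 * S1p * Λ + S1m * Λ ^ 2) /
      (b1 * b2 * b3 * b4 - Λ ^ 2) ^ 2)
    (hmu : mu = Λ * (Λ + b1 * b2) * (Λ + b1 * b3) * (Λ + b1 * b4) * (Λ + b2 * b3) *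
      (Λ + b2 * b4) * (Λ + b3 * b4) / (b1 * b2 * b3 * b4 - Λ ^ 2) ^ 4)
    (hmune : mu ≠ 0)
    (F0 G0 : ℂ)
    (hFG0 : F0 * G0 ≠ 0) (hFG1 : F0 * G0 ≠ 1)
    (hinv : F0 ^ 2 + S2m * F0 * G0 + S4m * G0 ^ 2 - S1m * F0 - S3m * G0 =
      (S2m + Λ / (b1 * b2 * b3 * b4) + Λ⁻¹) * (F0 * G0 - 1)) :
    ∃! φ0 : ℂ, φ0 ≠ 0 ∧ F0 = φ0 + Feq + mu / φ0 ∧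
      G0 = Λ * φ0 + Geq + (b1 * b2 * b3 * b4 / Λ) * (mu / φ0) := by
  obtain ⟨P, hP⟩ : ∃ P, P = b1 * b2 * b3 * b4 := ⟨_, rfl⟩
  obtain ⟨S2, hS2⟩ : ∃ S2, S2 = b1 * b2 + b1 * b3 + b1 * b4 + b2 * b3 + b2 * b4 + b3 * b4 :=
    ⟨_, rfl⟩
  have hP0 : P ≠ 0 := by rw [hP]; simp [hb1, hb2, hb3, hb4]
  have e1 : S1m = S3p / P := by rw [hS1m, hS3p, hP]; field_simp; ring
  have e2 : S2m = S2 / P := by rw [hS2m, hS2, hP]; field_simp; ring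
  have e3 : S3m = S1p / P := by rw [hS3m, hS1p, hP]; field_simp; ring
  have e4 : S4m = 1 / P := by rw [hS4m, hP]; field_simp
  have hconst := conic_constant b1 b2 b3 b4 Λ P S1p S2 S3p hP hS1p hS2 hS3p
  clear hS1m hS2m hS3m hS4m hS1p hS3p hS2
  subst e1 e2 e3 e4
  rw [← hP] at hΛ2 hFeq hGeq hmu hinv ⊢
  have hD : P - Λ ^ 2 ≠ 0 := sub_ne_zero.mpr hΛ2.symm
  have hF : Feq * (P - Λ ^ 2) ^ 2 = -Λ * (P * S1p + 2 * S3p * Λ + S1p * Λ ^ 2) := by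
    rw [hFeq]; field_simp
  have hG : Geq * (P - Λ ^ 2) ^ 2 = -Λ * (P * S3p + 2 * P * S1p * Λ + S3p * Λ ^ 2) := by
    rw [hGeq]; field_simp
  have hcon : P * Λ * F0 ^ 2 + Λ * G0 ^ 2 - (Λ ^ 2 + P) * F0 * G0 - Λ * S3p * F0 - Λ * S1p * G0 +
      (Λ * S2 + Λ ^ 2 + P) = 0 := by
    field_simp at hinv
    linear_combination hinv
  have hR := conic_centred Λ P S1p S2 S3p Feq Geq F0 G0 _ hD hF hG hconst hcon
  have hmuD : mu * (P - Λ ^ 2) ^ 4 = Λ * ((Λ + b1 * b2) * (Λ + b1 * b3) * (Λ + b1 * b4) *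
      (Λ + b2 * b3) * (Λ + b2 * b4) * (Λ + b3 * b4)) := by
    rw [hmu, div_mul_cancel₀ _ (pow_ne_zero 4 hD)]; ring
  obtain ⟨u, hu⟩ : ∃ u, u = (P * (F0 - Feq) - Λ * (G0 - Geq)) / (P - Λ ^ 2) := ⟨_, rfl⟩
  obtain ⟨v, hv⟩ : ∃ v, v = Λ * ((G0 - Geq) - Λ * (F0 - Feq)) / (P - Λ ^ 2) := ⟨_, rfl⟩
  have hu' : u * (P - Λ ^ 2) = P * (F0 - Feq) - Λ * (G0 - Geq) := by
    rw [hu, div_mul_cancel₀ _ hD]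
  have hv' : v * (P - Λ ^ 2) = Λ * ((G0 - Geq) - Λ * (F0 - Feq)) := by
    rw [hv, div_mul_cancel₀ _ hD]
  have huv : u * v = mu := by
    apply mul_right_cancel₀ (pow_ne_zero 4 hD)
    rw [hmuD, ← hR, ← hu']
    linear_combination u * (P - Λ ^ 2) ^ 3 * hv'
  have hu0 : u ≠ 0 := by
    rintro rfl
    exact hmune (by rw [← huv, zero_mul])
  have hvu : mu / u = v := by rw [← huv, mul_div_cancel_left₀ _ hu0]
  refine ⟨u, ⟨hu0, ?_, ?_⟩, ?_⟩
  · rw [hvu]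
    apply mul_right_cancel₀ hD
    linear_combination -hu' - hv'
  · rw [hvu]
    apply mul_right_cancel₀ (mul_ne_zero hD hΛ)
    linear_combination -Λ ^ 2 * hu' - P * hv' - v * (P - Λ ^ 2) * div_mul_cancel₀ P hΛ
  · rintro φ ⟨-, h1, h2⟩
    have h2' : Λ * (G0 - Geq) = Λ ^ 2 * φ + P * (mu / φ) := by
      rw [h2]
      linear_combination (mu / φ) * mul_div_cancel₀ P hΛ
    apply mul_right_cancel₀ hD
    linear_combination -hu' - P * h1 + h2'
end

section
/- (Bäcklund transformation T₁.) Let b1,…,b8 be nonzero complex numbers with q = b1b2b3b4/(b5b6b7b8), let T ⊆ ℂ∖{0} satisfy qT ⊆ T, and let f, g : T → ℂ∖{0} be nonvanishing functions such that the relations (E1), (E2) hold at every t ∈ T with parameters (b1,…,b8) and f̄ = f(qt), ḡ = g(qt). Define b'_i = 1/b_{i+4} for 1 ≤ i ≤ 4 and b'_i = 1/b_{i−4} for 5 ≤ i ≤ 8 (so b'1b'2b'3b'4/(b'5b'6b'7b'8) = q). Then the functions f'(t) = t/f(t) and g'(t) = t/g(t) satisfy the relations (E1), (E2) at every t ∈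 T with parameters (b'1,…,b'8) and f̄' = f'(qt), ḡ' = g'(qt). -/
/-!
The substitution `f ↦ t / f`, `g ↦ t / g` exchanges the two sides of each relation, factor by
factor: for instance `g' f' - t²` becomes `-t² (g f - 1) / (g f)`, `g' f' - 1` becomes
`-(g f - t²) / (g f)`, and `g' - 1 / bᵢ` becomes `-(g - bᵢ t) / (bᵢ g)`. Collecting the monomial
prefactors, those of the two sides agree precisely because `q b₅ b₆ b₇ b₈ = b₁ b₂ b₃ b₄`.
The nonvanishing of `q` and of the values at `q t` (which lies in `T`) makes every division
legitimate.
-/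

/-- A factor `g f - c` under inversion of both variables, `a` and `b` being the numerators. With
`c = a * b` it yields a multiple of `g * f - 1`, with `c = 1` a multiple of `g * f - a * b`. -/
lemma inv_pair_sub {g f : ℂ} (a b c : ℂ) (hg : g ≠ 0) (hf : f ≠ 0) :
    a / g * (b / f) - c = -(c * (g * f) - a * b) * (g⁻¹ * f⁻¹) := by
  field_simp
  ring

/-- A linear factor `x - c` under `x ↦ s / x`, rescaled to be monic in `x`. -/
lemma inv_sub {x c : ℂ} (s : ℂ) (hx : x ≠ 0) (hc : c ≠ 0) :
    s / x - c = -c * (x - s / c) * x⁻¹ := by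
  field_simp
  ring


/-- The q-P(A₁) system in polynomial form: relations (E1) and (E2) for complex
quantities `(t, f, g, fb, gb)`, where `fb`, `gb` stand for `f̄`, `ḡ`. -/
def qpSys (b1 b2 b3 b4 b5 b6 b7 b8 q t f g fb gb : ℂ) : Prop :=
  ((g * f - t ^ 2) * (g * fb - q * t ^ 2) * (g - b5) * (g - b6) * (g - b7) * (g - b8) =
    (g * f - 1) * (g * fb - 1) * (g - b1 * t) * (g - b2 * t) * (g - b3 * t) * (g - b4 * t)) ∧
  ((g * fb - q * t ^ 2) * (gb * fb - q ^ 2 * t ^ 2) * (fb - b5⁻¹) * (fb - b6⁻¹) *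
      (fb - b7⁻¹) * (fb - b8⁻¹) =
    (g * fb - 1) * (gb * fb - 1) * (fb - q * t / b1) * (fb - q * t / b2) *
      (fb - q * t / b3) * (fb - q * t / b4))

theorem stmt17 (b1 b2 b3 b4 b5 b6 b7 b8 q : ℂ)
    (hb1 : b1 ≠ 0) (hb2 : b2 ≠ 0) (hb3 : b3 ≠ 0) (hb4 : b4 ≠ 0)
    (hb5 : b5 ≠ 0) (hb6 : b6 ≠ 0) (hb7 : b7 ≠ 0) (hb8 : b8 ≠ 0)
    (hq : q = b1 * b2 * b3 * b4 / (b5 * b6 * b7 * b8))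
    (T : Set ℂ) (hT0 : ∀ t ∈ T, t ≠ 0) (hTq : ∀ t ∈ T, q * t ∈ T)
    (f g : ℂ → ℂ) (hfne : ∀ t ∈ T, f t ≠ 0) (hgne : ∀ t ∈ T, g t ≠ 0)
    (hsol : ∀ t ∈ T,
      qpSys b1 b2 b3 b4 b5 b6 b7 b8 q t (f t) (g t) (f (q * t)) (g (q * t))) :
    ∀ t ∈ T,
      qpSys b5⁻¹ b6⁻¹ b7⁻¹ b8⁻¹ b1⁻¹ b2⁻¹ b3⁻¹ b4⁻¹ q t
        (t / f t) (t / g t) ((q * t) / f (q * t)) ((q * t) / g (q * t)) := by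
  intro t ht
  obtain ⟨h1, h2⟩ := hsol t ht
  have ht0 := hT0 t ht
  have hqt := hTq t ht
  have hf := hfne t ht
  have hg := hgne t ht
  have hfb := hfne _ hqt
  have hgb := hgne _ hqt
  have hq0 : q ≠ 0 := left_ne_zero_of_mul (hT0 _ hqt)
  have hs : q * t ≠ 0 := hT0 _ hqt
  -- The only relation among the parameters, in the two forms matching the prefactors below.
  have hB : b1 * b2 * b3 * b4 = q * (b5 * b6 * b7 * b8) := by
    rw [hq]; field_simp
  have hK : q * (b1⁻¹ * b2⁻¹ * b3⁻¹ * b4⁻¹) = b5⁻¹ * b6⁻¹ * b7⁻¹ * b8⁻¹ := by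
    rw [hq]; field_simp
  generalize f (q * t) = F at *
  generalize g (q * t) = G at *
  generalize f t = x at *
  generalize g t = y at *
  -- Linear factors in `g`.
  have hgb' : ∀ b : ℂ, b ≠ 0 → t / y - b⁻¹ = -b⁻¹ * (y - b * t) * y⁻¹ := by
    intro b hb
    rw [inv_sub t hg (inv_ne_zero hb), div_inv_eq_mul, mul_comm t b]
  have hgt' : ∀ b : ℂ, b ≠ 0 → t / y - b⁻¹ * t = -(b⁻¹ * t) * (y - b) * y⁻¹ := by
    intro b hb
    rw [inv_sub t hg (mul_ne_zero (inv_ne_zero hb) ht0)]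
    congr 3
    field_simp
  -- Linear factors in `f̄`.
  have hfb' : ∀ b : ℂ, b ≠ 0 → q * t / F - b⁻¹⁻¹ = -b * (F - q * t / b) * F⁻¹ := by
    intro b hb
    rw [inv_inv, inv_sub _ hfb hb]
  have hft' : ∀ b : ℂ, b ≠ 0 →
      q * t / F - q * t / b⁻¹ = -(q * t * b) * (F - b⁻¹) * F⁻¹ := by
    intro b hb
    rw [div_inv_eq_mul, inv_sub _ hfb (mul_ne_zero hs hb)]
    congr 3
    field_simp
  constructor
  · rw [hgb' b1 hb1, hgb' b2 hb2, hgb' b3 hb3, hgb' b4 hb4, hgt' b5 hb5, hgt' b6 hb6,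
      hgt' b7 hb7, hgt' b8 hb8, inv_pair_sub t t _ hg hf, inv_pair_sub t t _ hg hf,
      inv_pair_sub t (q * t) _ hg hfb, inv_pair_sub t (q * t) _ hg hfb]
    linear_combination
      (t ^ 4 * x⁻¹ * F⁻¹ * y⁻¹ ^ 6) *
        ((y * x - 1) * (y * F - 1) * (y - b1 * t) * (y - b2 * t) * (y - b3 * t) *
          (y - b4 * t) * hK - b5⁻¹ * b6⁻¹ * b7⁻¹ * b8⁻¹ * h1)
  · rw [hfb' b1 hb1, hfb' b2 hb2, hfb' b3 hb3, hfb' b4 hb4, hft' b5 hb5, hft' b6 hb6,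
      hft' b7 hb7, hft' b8 hb8, inv_pair_sub t (q * t) _ hg hfb,
      inv_pair_sub t (q * t) _ hg hfb, inv_pair_sub (q * t) (q * t) _ hgb hfb,
      inv_pair_sub (q * t) (q * t) _ hgb hfb]
    -- Abstract the four-fold products so that only the prefactors remain to be compared.
    generalize F - q * t / b1 = u1 at *
    generalize F - q * t / b2 = u2 at *
    generalize F - q * t / b3 = u3 at *
    generalize F - q * t / b4 = u4 at *
    generalize F - b5⁻¹ = u5 at *
    generalize F - b6⁻¹ = u6 at *
    generalize F - b7⁻¹ = u7 at *
    generalize F - b8⁻¹ = u8 at *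
    linear_combination
      (q ^ 3 * t ^ 4 * y⁻¹ * G⁻¹ * F⁻¹ ^ 6) *
        ((y * F - 1) * (G * F - 1) * u1 * u2 * u3 * u4 * hB -
          q * (b5 * b6 * b7 * b8) * h2)
end

section
/- (Reduction to symmetric q-P(A1).) Let ξ, a, b, c, d be nonzero complex numbers, let σ ∈ ℂ satisfy σ² = ξ, and set q = ξ², b1 = aσ, b2 = σ/a, b3 = bσ, b4 = σ/b, b5 = c, b6 = 1/c, b7 = d, b8 = 1/d (so b1b2b3b4/(b5b6b7b8) = q). Let T ⊆ ℂ∖{0} satisfy ξT = T, and let f, g : T → ℂ be functions such that the relations (E1), (E2) hold at every t ∈ T with parameters (b1,…,b8) and f̄ = f(qt), ḡ = g(qt), and such that f(t) = g(t/ξ) for all t ∈ T. Define x(t) = f(σt) for t ∈ σ⁻¹T. Then x satisfies the symmetric q-P(A1) equation in cleared form: (x(t)·x(ξt) − ξt²)(x(t)·x(t/ξ) − t²/ξ)(x(t) − c)(x(t) − 1/c)(x(t) − d)(x(t) − 1/d) = (x(t)·x(ξt) − 1)(x(t)·x(t/ξ) − 1)(x(t) − at)(x(t) − t/a)(x(t)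 − bt)(x(t) − t/b) for all t ∈ σ⁻¹T. -/
theorem stmt18 (ξ a b c d σ q b1 b2 b3 b4 b5 b6 b7 b8 : ℂ)
    (hξ : ξ ≠ 0) (ha : a ≠ 0) (hb : b ≠ 0) (hc : c ≠ 0) (hd : d ≠ 0)
    (hσ : σ ^ 2 = ξ) (hqdef : q = ξ ^ 2)
    (hb1 : b1 = a * σ) (hb2 : b2 = σ / a) (hb3 : b3 = b * σ) (hb4 : b4 = σ / b)
    (hb5 : b5 = c) (hb6 : b6 = c⁻¹) (hb7 : b7 = d) (hb8 : b8 = d⁻¹)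
    (T : Set ℂ) (hT0 : ∀ t ∈ T, t ≠ 0) (hTξ : (fun t => ξ * t) '' T = T)
    (f g : ℂ → ℂ)
    (hsol : ∀ t ∈ T,
      qpSys b1 b2 b3 b4 b5 b6 b7 b8 q t (f t) (g t) (f (q * t)) (g (q * t)))
    (hsym : ∀ t ∈ T, f t = g (t / ξ))
    (x : ℂ → ℂ) (hx : ∀ t : ℂ, x t = f (σ * t)) :
    ∀ t : ℂ, σ * t ∈ T →
      (x t * x (ξ * t) - ξ * t ^ 2) * (x t * x (t / ξ) - t ^ 2 / ξ) * (x t - c) *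
          (x t - c⁻¹) * (x t - d) * (x t - d⁻¹) =
        (x t * x (ξ * t) - 1) * (x t * x (t / ξ) - 1) * (x t - a * t) * (x t - t / a) *
          (x t - b * t) * (x t - t / b) := by
  intro t ht
  have hσ0 : σ ≠ 0 := by
    rintro rfl
    exact hξ (by simpa using hσ.symm)
  subst hσ hqdef hb1 hb2 hb3 hb4 hb5 hb6 hb7 hb8
  -- The evaluation point is `u = σ t / ξ = t / σ`, which lies in `T` because `ξ T = T`.
  obtain ⟨u, huT, hu⟩ := hTξ.symm ▸ ht
  have hu' : u = t / σ := by
    apply mul_left_cancel₀ hξ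
    rw [show σ ^ 2 * u = σ * t from hu]
    field_simp
  subst hu'
  have hg : g (t / σ) = x t := by
    rw [hx, hsym _ ht]
    congr 1
    field_simp
  have hf : f (t / σ) = x (t / σ ^ 2) := by
    rw [hx]
    congr 1
    field_simp
  have hfb : f ((σ ^ 2) ^ 2 * (t / σ)) = x (σ ^ 2 * t) := by
    rw [hx]
    congr 1
    field_simp
  have h := (hsol _ huT).1
  rw [hg, hf, hfb] at h
  have e1 : (t / σ) ^ 2 = t ^ 2 / σ ^ 2 := div_pow _ _ _
  have e2 : (σ ^ 2) ^ 2 * (t ^ 2 / σ ^ 2) = σ ^ 2 * t ^ 2 := by field_simp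
  have e3 : ∀ k : ℂ, k * σ * (t / σ) = k * t := fun k => by field_simp
  have e4 : ∀ k : ℂ, σ / k * (t / σ) = t / k := fun k => by
    rw [div_mul_div_comm, mul_comm k σ, mul_div_mul_left _ _ hσ0]
  rw [e1, e2, e3, e3, e4, e4] at h
  linear_combination h
end
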